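/- arXiv:1911.08809 — 2 statements merged into one kernel-verified Lean document; each statement's English description precedes it below -/
import Mathlib

section
/- In the distance-based mechanism, truthful value reporting weakly dominates value misreporting when the forwarded follower set is fixed: for every buyer i with true type θ_i = (v_i, r_i), every profile θ'_{-i} of reports of the other buyers, and every report θ'_i = (v'_i, r_i), it holds that v_i·f_i(θ_i, θ'_{-i}) − t_i(θ_i, θ'_{-i}) ≥ v_i·f_i(θ'_i, θ'_{-i}) − t_i(θ'_i, θ'_{-i}). -/
open scoped Classical NNReal ENNReal

namespace SNA

/-- A reported type `θ'_i = (v'_i, r'_i)`: a (nonnegative) value for one unit together with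
the set of followers to whom the buyer forwards the information. -/
abbrev Profile (N : Type*) := N → ℝ≥0 × Finset N

variable {N : Type*} [Fintype N] [DecidableEq N] [LinearOrder N]

/-- `reachIn θ rs m i`: in the digraph induced by the reported profile `θ` and the
seller's direct-buyer set `rs` (the seller links to every member of `rs`, and each buyer
`j` links to every member of `(θ j).2`), there is a directed path from the seller to `i`
using exactly `m + 1` edges. -/
def reachIn (θ : Profile N) (rs : Finset N) : ℕ → N → Prop
  | 0, i => i ∈ rs
  | m + 1, i => ∃ j, reachIn θ rs m j ∧ i ∈ (θ j).2

/-- Buyer `i` is connected: reachable from the seller. -/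
def Connected (θ : Profile N) (rs : Finset N) (i : N) : Prop :=
  ∃ m, reachIn θ rs m i

/-- `N̂`: the set of connected buyers. -/
noncomputable def Nhat (θ : Profile N) (rs : Finset N) : Finset N :=
  Finset.univ.filter (Connected θ rs)

/-- `d(i)`: the length of a shortest directed path from the seller to `i`
(`⊤` if `i` is not connected). -/
noncomputable def dNet (θ : Profile N) (rs : Finset N) (i : N) : ℕ∞ :=
  sInf {n : ℕ∞ | ∃ m : ℕ, reachIn θ rs m i ∧ n = (m : ℕ∞) + 1}

/-- Reachability from the seller by a directed path that avoids buyer `j`. -/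
def reachInAvoid (θ : Profile N) (rs : Finset N) (j : N) : ℕ → N → Prop
  | 0, i => i ∈ rs ∧ i ≠ j
  | m + 1, i => ∃ a, reachInAvoid θ rs j m a ∧ i ∈ (θ a).2 ∧ i ≠ j

/-- `j` is a critical parent of `i`: both are connected, `j ≠ i`, and every directed path
from the seller to `i` passes through `j`. -/
def CriticalParent (θ : Profile N) (rs : Finset N) (j i : N) : Prop :=
  Connected θ rs i ∧ Connected θ rs j ∧ j ≠ i ∧ ¬ ∃ m, reachInAvoid θ rs j m i

/-- The descendants of `i` in the diffusion critical tree `T(θ)`, i.e. `i` together with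
the connected buyers lying in the subtree of `T(θ)` rooted at `i`; the ancestors of a
buyer in the diffusion critical tree are exactly its critical parents. -/
noncomputable def desc (θ : Profile N) (rs : Finset N) (i : N) : Finset N :=
  Finset.univ.filter fun j => Connected θ rs j ∧ (j = i ∨ CriticalParent θ rs i j)

/-- `N̂₋ᵢ`: the connected buyers with `i` and all of its descendants in the diffusion
critical tree removed. -/
noncomputable def NhatMinus (θ : Profile N) (rs : Finset N) (i : N) : Finset N :=
  Nhat θ rs \ desc θ rs i

/-- The `k'`-th highest element of a multiset of values (as an element of `ℝ≥0∞`):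
`⊤` if `k' ≤ 0`, and `0` if the multiset has fewer than `k'` elements. -/
noncomputable def kthHighest (s : Multiset ℝ≥0) (k' : ℕ) : ℝ≥0∞ :=
  if k' = 0 then ⊤
  else if s.card < k' then 0
  else ((s.sort (· ≤ ·)).getD (s.card - k') 0 : ℝ≥0)

/-- `v*(S, k')`: the `k'`-th highest reported value among the buyers in `S`. -/
noncomputable def vstar (θ : Profile N) (S : Finset N) (k' : ℕ) : ℝ≥0∞ :=
  kthHighest (S.val.map fun i => (θ i).1) k'

/-- The priority order on the connected buyers: ascending order of the distance `d(·)`,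
with ties broken by the fixed linear order on `N` (mergeSort is stable). -/
noncomputable def prioList (θ : Profile N) (rs : Finset N) : List N :=
  ((Nhat θ rs).sort (· ≤ ·)).mergeSort fun i j => decide (dNet θ rs i ≤ dNet θ rs j)

/-- One run of the distance-based mechanism over a list of buyers (in priority order),
given the current winner set `W` and the remaining number of units `k'`; `extra` is an
additional pool of (dummy) values included in every price computation.
Buyer `i` faces the price `p = v*((N̂₋ᵢ ∖ W) + extra, k')` and wins (paying `p`)
iff her reported value is at least `p`. -/
noncomputable def runAux (θ : Profile N) (rs : Finset N) (extra : Multiset ℝ≥0) :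
    List N → Finset N → ℕ → (N → ℕ) × (N → ℝ≥0)
  | [], _, _ => (fun _ => 0, fun _ => 0)
  | i :: rest, W, k' =>
    let p : ℝ≥0∞ :=
      kthHighest (((NhatMinus θ rs i \ W).val.map fun j => (θ j).1) + extra) k'
    if (((θ i).1 : ℝ≥0∞)) ≥ p then
      let out := runAux θ rs extra rest (insert i W) (k' - 1)
      (Function.update out.1 i 1, Function.update out.2 i p.toNNReal)
    else
      let out := runAux θ rs extra rest W k'
      (Function.update out.1 i 0, Function.update out.2 i 0)

/-- The distance-based mechanism: `.1` is the allocation rule `f` (each buyer is mapped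
to `1` if she wins a unit and to `0` otherwise; unconnected buyers get `0`) and `.2` is
the payment rule `t` (unconnected buyers and losers pay `0`). -/
noncomputable def DBM (k : ℕ) (θ : Profile N) (rs : Finset N) : (N → ℕ) × (N → ℝ≥0) :=
  runAux θ rs 0 (prioList θ rs) ∅ k

/-- The distance-based mechanism with reserve price `vh`: `k` dummy buyers of value `vh`,
attached directly to the seller only (hence lying in every `N̂₋ᵢ` and never being
descendants of a real buyer), are added to every price pool, but they are never processed
as bidders and never win a unit. -/
noncomputable def DBMres (k : ℕ) (vh : ℝ≥0) (θ : Profile N) (rs : Finset N) :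
    (N → ℕ) × (N → ℝ≥0) :=
  runAux θ rs (Multiset.replicate k vh) (prioList θ rs) ∅ k

/-- The No-Diffusion-VCG mechanism: VCG applied to the direct buyers only. -/
noncomputable def NDVCG (k : ℕ) (θ : Profile N) (rs : Finset N) : (N → ℕ) × (N → ℝ≥0) :=
  (fun i => if i ∈ rs ∧ (((θ i).1 : ℝ≥0∞)) ≥ vstar θ (rs.erase i) k then 1 else 0,
   fun i => if i ∈ rs ∧ (((θ i).1 : ℝ≥0∞)) ≥ vstar θ (rs.erase i) k
     then (vstar θ (rs.erase i) k).toNNReal else 0)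

/-- The FCFS-F mechanism: the first `k` connected buyers in the priority order get a
unit for free. -/
noncomputable def FCFS (k : ℕ) (θ : Profile N) (rs : Finset N) : (N → ℕ) × (N → ℝ≥0) :=
  (fun i => if i ∈ (prioList θ rs).take k then 1 else 0, fun _ => 0)

/-!
Buyer `i` faces a price computed from the other reports and from the set of earlier winners, and
only the latter can depend on her own report. With `W` the winners so far, the price offered to a
buyer with pool `P` is at most `x` iff fewer than `k` units are claimed at `x`, that is
`#{j ∈ P | x < v j} + #{j ∈ W | v j ≤ x} < k`. So a buyer worth at most `x` is awarded a unit or not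
depending on comparisons with values at most `x` only. Hence all reports of `i` above `x` lead to
the same number of earlier winners worth at most `x`, and lowering the report to exactly `x` can
only increase this number. Consequently, whenever a deviation wins at a price `x` below the true
value of `i`, her truthful price is at most `x`.
-/

section KthHighest

theorem getElem_le_iff_countP_lt {α : Type*} [LinearOrder α] {l : List α} (hl : l.SortedLE)
    {n : ℕ} (hn : n < l.length) (x : α) :
    l[n] ≤ x ↔ l.countP (x < ·) < l.length - n := by
  constructor
  · intro hx
    have take_eq_zero : (l.take (n + 1)).countP (x < ·) = 0 := by
      simp only [List.countP_eq_zero, decide_eq_true_eq, not_lt, List.mem_take_iff_getElem]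
      rintro _ ⟨m, hm, rfl⟩
      exact (hl.getElem_le_getElem_of_le (by omega)).trans hx
    have drop_le := List.countP_le_length (p := (x < ·)) (l := l.drop (n + 1))
    rw [List.length_drop] at drop_le
    rw [← List.take_append_drop (n + 1) l, List.countP_append, List.take_append_drop]
    omega
  · contrapose!
    intro hx
    have drop_eq_length : (l.drop n).countP (x < ·) = (l.drop n).length := by
      simp only [List.countP_eq_length, decide_eq_true_eq, List.mem_drop_iff_getElem]
      rintro _ ⟨m, hm, rfl⟩
      exact hx.trans_le (hl.getElem_le_getElem_of_le (by omega))
    rw [← List.length_drop, ← drop_eq_length]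
    exact (List.drop_sublist n l).countP_le

theorem kthHighest_le_iff (s : Multiset ℝ≥0) (k : ℕ) (x : ℝ≥0) :
    kthHighest s k ≤ x ↔ s.countP (x < ·) < k := by
  have countP_le := s.countP_le_card (x < ·)
  unfold kthHighest
  split_ifs with hk hcard
  · simp [hk]
  · simpa using countP_le.trans_lt hcard
  · have hlen : (s.sort (· ≤ ·)).length = s.card := s.length_sort (· ≤ ·)
    have hcount : s.countP (x < ·) = (s.sort (· ≤ ·)).countP (x < ·) := by
      rw [← Multiset.coe_countP, Multiset.sort_eq]
    rw [ENNReal.coe_le_coe, List.getD_eq_getElem _ _ (by omega),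
      getElem_le_iff_countP_lt (s.pairwise_sort (· ≤ ·)).sortedLE (by omega), hlen, hcount]
    omega

end KthHighest

section GreedySelection

variable {ι α : Type*} [LinearOrder α]

/-- An offer `x` meets the price computed from the pool `P` and the set `W` of earlier winners:
fewer than `k` units are claimed at `x`. The bidders worth more than `x`, winners or not, claim one
unit each, as do the dummies in `extra`, and so do the winners worth at most `x`. -/
def MeetsPrice (v : ι → α) (extra : Multiset α) (k : ℕ) (P W : Finset ι) (x : α) : Prop :=
  (P.filter (x < v ·)).card + extra.countP (x < ·) + (W.filter (v · ≤ x)).card < k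

/-- The winners after the bidders in a list have been processed in turn, each being served iff her
value meets the current price; `P m` is the pool of bidder `m` and `W` the set of earlier
winners. -/
noncomputable def greedyWinners [DecidableEq ι] (v : ι → α) (extra : Multiset α) (k : ℕ)
    (P : ι → Finset ι) (W : Finset ι) (l : List ι) : Finset ι :=
  l.foldl (fun W m => if MeetsPrice v extra k (P m) W (v m) then insert m W else W) W

theorem card_filter_lt_of_not_meetsPrice {v v' : ι → α} {extra : Multiset α} {k : ℕ}
    {P W W' : Finset ι} {x : α} (hP : ∀ j ∈ P, x < v' j → x < v j)
    (meets : MeetsPrice v extra k P W x) (not_meets : ¬ MeetsPrice v' extra k P W' x) :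
    (W.filter (v · ≤ x)).card < (W'.filter (v' · ≤ x)).card := by
  have pool_le := Finset.card_le_card (Finset.monotone_filter_right P hP)
  unfold MeetsPrice at meets not_meets
  omega

variable [DecidableEq ι]

theorem greedyWinners_concat (v : ι → α) (extra : Multiset α) (k : ℕ) (P : ι → Finset ι)
    (W : Finset ι) (l : List ι) (m : ι) :
    greedyWinners v extra k P W (l ++ [m]) =
      if MeetsPrice v extra k (P m) (greedyWinners v extra k P W l) (v m) then
        insert m (greedyWinners v extra k P W l)
      else greedyWinners v extra k P W l :=
  List.foldl_concat ..

theorem mem_of_mem_greedyWinners {v : ι → α} {extra : Multiset α} {k : ℕ} {P : ι → Finset ι}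
    {l : List ι} {j : ι} (hj : j ∈ greedyWinners v extra k P ∅ l) : j ∈ l := by
  induction l using List.reverseRecOn with
  | nil => simp [greedyWinners] at hj
  | append_singleton l m ih =>
    rw [greedyWinners_concat] at hj
    grind

theorem card_greedyWinners_filter_le {v v' : ι → α} {x : α}
    (h : ∀ j, v j = v' j ∨ x < v j ∧ x ≤ v' j) (extra : Multiset α) (k : ℕ) (P : ι → Finset ι)
    {l : List ι} (hl : l.Nodup) :
    ((greedyWinners v extra k P ∅ l).filter (v · ≤ x)).card ≤
      ((greedyWinners v' extra k P ∅ l).filter (v' · ≤ x)).card := by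
  induction l using List.reverseRecOn generalizing v v' x with
  | nil => simp [greedyWinners]
  | append_singleton l m ih =>
    obtain ⟨hl, hm⟩ : l.Nodup ∧ m ∉ l := by
      simpa [List.nodup_append, ← List.forall_mem_ne'] using hl
    have hmW' := mt (mem_of_mem_greedyWinners (v := v') (extra := extra) (k := k) (P := P)) hm
    have winners_le := ih h hl
    simp only [greedyWinners_concat]
    set W := greedyWinners v extra k P ∅ l
    set W' := greedyWinners v' extra k P ∅ l
    by_cases served : MeetsPrice v extra k (P m) W (v m) ∧ v m ≤ x
    · obtain ⟨meets, hmx⟩ := served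
      have hvm : v m = v' m := (h m).resolve_right fun above => hmx.not_gt above.1
      by_cases meets' : MeetsPrice v' extra k (P m) W' (v' m)
      · simp only [meets, meets', hmx, hvm ▸ hmx, if_true, Finset.filter_insert]
        rw [Finset.card_insert_of_notMem (mt (Finset.mem_of_mem_filter m) hmW')]
        exact (Finset.card_insert_le _ _).trans (Nat.succ_le_succ winners_le)
      · have pool_imp : ∀ j ∈ P m, v m < v' j → v m < v j := fun j _ hj =>
          (h j).elim (fun hvj => hvj ▸ hj) fun above => hmx.trans_lt above.1
        have winners_lt := card_filter_lt_of_not_meetsPrice pool_imp meets (hvm ▸ meets')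
        obtain below | rfl := hmx.lt_or_eq
        · -- Strictly below `x` the hypothesis `h` is symmetric in `v` and `v'`.
          have h_swap : ∀ j, v' j = v j ∨ v m < v' j ∧ v m ≤ v j := fun j =>
            (h j).imp Eq.symm fun above => ⟨below.trans_le above.2, (below.trans above.1).le⟩
          exact absurd winners_lt (ih h_swap hl).not_gt
        · simp only [meets, meets', if_true, if_false, le_refl, Finset.filter_insert]
          exact (Finset.card_insert_le _ _).trans winners_lt
    · calc _ = (W.filter (v · ≤ x)).card := by
            split_ifs with meets
            · rw [Finset.filter_insert, if_neg fun hmx => served ⟨meets, hmx⟩]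
            · rfl
        _ ≤ (W'.filter (v' · ≤ x)).card := winners_le
        _ ≤ _ := Finset.card_le_card <| Finset.filter_subset_filter _ <| by
            split_ifs
            exacts [Finset.subset_insert m W', Finset.Subset.refl W']

end GreedySelection

section Network

variable {B : Type*} {θ θ' : Profile B} {rs : Finset B}

theorem reachIn_congr (h : ∀ j, (θ j).2 = (θ' j).2) : reachIn θ rs = reachIn θ' rs := by
  funext n
  induction n with
  | zero => rfl
  | succ n ih => funext i; simp only [reachIn, ih, h]

theorem reachInAvoid_congr (h : ∀ j, (θ j).2 = (θ' j).2) :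
    reachInAvoid θ rs = reachInAvoid θ' rs := by
  funext j n
  induction n with
  | zero => rfl
  | succ n ih => funext i; simp only [reachInAvoid, ih, h]

theorem Connected_congr (h : ∀ j, (θ j).2 = (θ' j).2) : Connected θ rs = Connected θ' rs := by
  funext i
  simp only [Connected, reachIn_congr h]

theorem CriticalParent_congr (h : ∀ j, (θ j).2 = (θ' j).2) :
    CriticalParent θ rs = CriticalParent θ' rs := by
  funext j i
  simp only [CriticalParent, Connected_congr h, reachInAvoid_congr h]

theorem dNet_congr (h : ∀ j, (θ j).2 = (θ' j).2) : dNet θ rs = dNet θ' rs := by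
  funext i
  simp only [dNet, reachIn_congr h]

theorem reachInAvoid_or_exists_lt_reachIn {n : ℕ} {i j : B} (hi : reachIn θ rs n i)
    (hij : i ≠ j) : reachInAvoid θ rs j n i ∨ ∃ m < n, reachIn θ rs m j := by
  induction n generalizing i with
  | zero => exact Or.inl ⟨hi, hij⟩
  | succ n ih =>
    obtain ⟨a, ha, hai⟩ := hi
    obtain rfl | haj := eq_or_ne a j
    · exact Or.inr ⟨n, n.lt_succ_self, ha⟩
    · obtain avoid | ⟨m, hm, hj⟩ := ih ha haj
      · exact Or.inl ⟨a, avoid, hai, hij⟩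
      · exact Or.inr ⟨m, hm.trans n.lt_succ_self, hj⟩

theorem dNet_le_of_reachIn {n : ℕ} {i : B} (hi : reachIn θ rs n i) : dNet θ rs i ≤ n + 1 :=
  sInf_le ⟨n, hi, rfl⟩

theorem Connected.exists_reachIn_dNet_eq {i : B} (hi : Connected θ rs i) :
    ∃ n : ℕ, reachIn θ rs n i ∧ dNet θ rs i = n + 1 :=
  csInf_mem (s := {d : ℕ∞ | ∃ n : ℕ, reachIn θ rs n i ∧ d = n + 1})
    (let ⟨n, hn⟩ := hi; ⟨n + 1, n, hn, rfl⟩)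

theorem CriticalParent.dNet_lt {i j : B} (h : CriticalParent θ rs j i) :
    dNet θ rs j < dNet θ rs i := by
  obtain ⟨hi, -, hji, not_avoid⟩ := h
  obtain ⟨n, hn, dist_eq⟩ := hi.exists_reachIn_dNet_eq
  obtain avoid | ⟨m, hmn, hm⟩ := reachInAvoid_or_exists_lt_reachIn hn hji.symm
  · exact absurd ⟨n, avoid⟩ not_avoid
  · calc dNet θ rs j ≤ m + 1 := dNet_le_of_reachIn hm
      _ < n + 1 := by exact_mod_cast Nat.succ_lt_succ hmn
      _ = dNet θ rs i := dist_eq.symm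

variable [Fintype B]

theorem mem_NhatMinus [DecidableEq B] {i j : B} :
    j ∈ NhatMinus θ rs i ↔ Connected θ rs j ∧ j ≠ i ∧ ¬ CriticalParent θ rs i j := by
  simp only [NhatMinus, Nhat, desc, Finset.mem_sdiff, Finset.mem_filter, Finset.mem_univ, true_and]
  tauto

theorem notMem_NhatMinus_self [DecidableEq B] (i : B) : i ∉ NhatMinus θ rs i := by
  simp [mem_NhatMinus]

theorem NhatMinus_congr [DecidableEq B] (h : ∀ j, (θ j).2 = (θ' j).2) :
    NhatMinus θ rs = NhatMinus θ' rs := by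
  ext i j
  simp only [mem_NhatMinus, Connected_congr h, CriticalParent_congr h]

variable [LinearOrder B]

theorem mem_prioList {i : B} : i ∈ prioList θ rs ↔ Connected θ rs i := by
  simp [prioList, Nhat]

theorem prioList_congr (h : ∀ j, (θ j).2 = (θ' j).2) : prioList θ rs = prioList θ' rs := by
  simp only [prioList, Nhat, Connected_congr h, dNet_congr h]

theorem nodup_prioList (θ : Profile B) (rs : Finset B) : (prioList θ rs).Nodup :=
  (List.mergeSort_perm _ _).nodup_iff.2 (Finset.sort_nodup _ _)

theorem pairwise_dNet_le_prioList (θ : Profile B) (rs : Finset B) :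
    (prioList θ rs).Pairwise fun j i => dNet θ rs j ≤ dNet θ rs i := by
  have sorted := List.pairwise_mergeSort (le := fun i j => decide (dNet θ rs i ≤ dNet θ rs j))
    (fun a b c hab hbc => by simp_all only [decide_eq_true_eq]; exact hab.trans hbc)
    (fun a b => by simpa using le_total (dNet θ rs a) (dNet θ rs b))
    ((Nhat θ rs).sort (· ≤ ·))
  simpa only [decide_eq_true_eq, prioList] using sorted

theorem pairwise_mem_NhatMinus_prioList [DecidableEq B] (θ : Profile B) (rs : Finset B) :
    (prioList θ rs).Pairwise fun j i => j ∈ NhatMinus θ rs i := by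
  refine ((pairwise_dNet_le_prioList θ rs).and (nodup_prioList θ rs)).imp_of_mem ?_
  rintro j i hj - ⟨dist_le, hji⟩
  exact mem_NhatMinus.2 ⟨mem_prioList.1 hj, hji, fun h => h.dNet_lt.not_ge dist_le⟩

end Network

section Run

/-- The units received and the payment made by buyer `i` under an outcome of the mechanism. -/
def outcomeOf {B : Type*} (out : (B → ℕ) × (B → ℝ≥0)) (i : B) : ℕ × ℝ≥0 := (out.1 i, out.2 i)

/-- The units received and the payment made by a buyer who reports the value `b` and is offered a
unit at the price `p`. -/
noncomputable def postedPrice (p : ℝ≥0∞) (b : ℝ≥0) : ℕ × ℝ≥0 :=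
  if p ≤ b then (1, p.toNNReal) else (0, 0)

variable {B : Type*} [Fintype B] [DecidableEq B] {θ θ' : Profile B} {rs : Finset B}
  {extra : Multiset ℝ≥0} {k : ℕ} {i : B}

/-- The price offered to buyer `i` by `runAux` when `W` is the set of earlier winners, so that
`k - W.card` of the `k` units are left. -/
noncomputable def offeredPrice (θ : Profile B) (rs : Finset B) (extra : Multiset ℝ≥0) (k : ℕ)
    (W : Finset B) (i : B) : ℝ≥0∞ :=
  kthHighest (((NhatMinus θ rs i \ W).val.map fun j => (θ j).1) + extra) (k - W.card)

theorem offeredPrice_le_iff {W : Finset B} (hW : W ⊆ NhatMinus θ rs i) (x : ℝ≥0) :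
    offeredPrice θ rs extra k W i ≤ x ↔
      MeetsPrice (fun j => (θ j).1) extra k (NhatMinus θ rs i) W x := by
  have pool_split : ((NhatMinus θ rs i \ W).filter fun j => x < (θ j).1).card +
      (W.filter fun j => x < (θ j).1).card =
        ((NhatMinus θ rs i).filter fun j => x < (θ j).1).card := by
    rw [← Finset.card_union_of_disjoint
      (Finset.disjoint_filter_filter Finset.sdiff_disjoint), ← Finset.filter_union,
      Finset.sdiff_union_of_subset hW]
  have winners_split := W.card_filter_add_card_filter_not (fun j => (θ j).1 ≤ x)
  simp only [not_le] at winners_split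
  rw [offeredPrice, kthHighest_le_iff, Multiset.countP_add, Multiset.countP_map, MeetsPrice]
  change ((NhatMinus θ rs i \ W).filter fun j => x < (θ j).1).card + _ < _ ↔ _
  omega

theorem outcomeOf_runAux_of_notMem {l : List B} (hi : i ∉ l) (W : Finset B) (k' : ℕ) :
    outcomeOf (runAux θ rs extra l W k') i = (0, 0) := by
  induction l generalizing W k' with
  | nil => rfl
  | cons m l ih =>
    obtain ⟨him, hil⟩ := List.ne_and_not_mem_of_not_mem_cons hi
    have ih := ih hil
    simp only [outcomeOf] at ih
    simp only [outcomeOf, runAux]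
    split_ifs <;> simp [him, ih]

theorem outcomeOf_runAux_cons_self (l : List B) (W : Finset B) :
    outcomeOf (runAux θ rs extra (i :: l) W (k - W.card)) i =
      postedPrice (offeredPrice θ rs extra k W i) (θ i).1 := by
  simp only [outcomeOf, runAux, postedPrice, ge_iff_le]
  rw [← offeredPrice]
  split_ifs <;> simp

theorem outcomeOf_runAux_cons_of_ne {m : B} (hi : i ≠ m) (l : List B) {W : Finset B}
    (hm : m ∉ W) :
    outcomeOf (runAux θ rs extra (m :: l) W (k - W.card)) i =
      if offeredPrice θ rs extra k W m ≤ (θ m).1 then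
        outcomeOf (runAux θ rs extra l (insert m W) (k - (insert m W).card)) i
      else outcomeOf (runAux θ rs extra l W (k - W.card)) i := by
  rw [Finset.card_insert_of_notMem hm, ← Nat.sub_sub]
  simp only [outcomeOf, runAux, ge_iff_le]
  rw [← offeredPrice]
  split_ifs <;> simp [hi]

theorem outcomeOf_runAux_append {l₁ l₂ : List B} (hi : i ∉ l₁)
    (hl₁ : l₁.Pairwise fun j m => j ∈ NhatMinus θ rs m) {W : Finset B}
    (hW : ∀ m ∈ l₁, W ⊆ NhatMinus θ rs m) :
    let W' := greedyWinners (fun j => (θ j).1) extra k (NhatMinus θ rs) W l₁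
    outcomeOf (runAux θ rs extra (l₁ ++ l₂) W (k - W.card)) i =
      outcomeOf (runAux θ rs extra l₂ W' (k - W'.card)) i := by
  induction l₁ generalizing W with
  | nil => rfl
  | cons m l ih =>
    obtain ⟨him, hil⟩ := List.ne_and_not_mem_of_not_mem_cons hi
    obtain ⟨hm, hl⟩ := List.pairwise_cons.1 hl₁
    obtain ⟨hWm, hWl⟩ := List.forall_mem_cons.1 hW
    have hmW : m ∉ W := fun h => notMem_NhatMinus_self m (hWm h)
    have hinsert : ∀ n ∈ l, insert m W ⊆ NhatMinus θ rs n := fun n hn =>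
      Finset.insert_subset (hm n hn) (hWl n hn)
    rw [List.cons_append, outcomeOf_runAux_cons_of_ne him _ hmW, ih hil hl hinsert, ih hil hl hWl]
    simp only [offeredPrice_le_iff hWm, greedyWinners, List.foldl_cons]
    split_ifs <;> rfl

theorem outcomeOf_runAux_eq_postedPrice {l₁ l₂ : List B}
    (hl : (l₁ ++ i :: l₂).Pairwise fun j m => j ∈ NhatMinus θ rs m) :
    outcomeOf (runAux θ rs extra (l₁ ++ i :: l₂) ∅ k) i =
      postedPrice (offeredPrice θ rs extra k
        (greedyWinners (fun j => (θ j).1) extra k (NhatMinus θ rs) ∅ l₁) i) (θ i).1 := by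
  obtain ⟨hl₁, -, cross⟩ := List.pairwise_append.1 hl
  have hi : i ∉ l₁ := fun h => notMem_NhatMinus_self i (cross i h i List.mem_cons_self)
  rw [← outcomeOf_runAux_cons_self l₂, ← outcomeOf_runAux_append hi hl₁ (by simp)]
  rfl

theorem offeredPrice_le_of_offeredPrice_le (hr : ∀ j, (θ j).2 = (θ' j).2)
    (hv : ∀ j ≠ i, (θ j).1 = (θ' j).1) {l : List B} (hl : l.Nodup)
    (hli : ∀ j ∈ l, j ∈ NhatMinus θ rs i) {x : ℝ≥0} (hx : x < (θ i).1) (hx' : x ≤ (θ' i).1)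
    (hprice : offeredPrice θ' rs extra k
      (greedyWinners (fun j => (θ' j).1) extra k (NhatMinus θ' rs) ∅ l) i ≤ x) :
    offeredPrice θ rs extra k
      (greedyWinners (fun j => (θ j).1) extra k (NhatMinus θ rs) ∅ l) i ≤ x := by
  have agree : ∀ j, (θ j).1 = (θ' j).1 ∨ x < (θ j).1 ∧ x ≤ (θ' j).1 := fun j => by
    obtain rfl | hj := eq_or_ne j i
    exacts [Or.inr ⟨hx, hx'⟩, Or.inl (hv j hj)]
  have winners_le := card_greedyWinners_filter_le agree extra k (NhatMinus θ rs) hl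
  have pool_imp : ∀ j ∈ NhatMinus θ rs i, x < (θ j).1 → x < (θ' j).1 := fun j hj hxj =>
    hv j (mem_NhatMinus.1 hj).2.1 ▸ hxj
  rw [← NhatMinus_congr hr] at hprice
  rw [offeredPrice_le_iff fun j hj => hli j (mem_of_mem_greedyWinners hj)]
  rw [offeredPrice_le_iff fun j hj => NhatMinus_congr hr ▸ hli j (mem_of_mem_greedyWinners hj),
    ← NhatMinus_congr hr] at hprice
  by_contra not_meets
  exact winners_le.not_gt (card_filter_lt_of_not_meetsPrice pool_imp hprice not_meets)

end Run

section Utility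

/-- The utility of a buyer with true value `v` who receives `o.1` units and pays `o.2`. -/
def utility (v : ℝ≥0) (o : ℕ × ℝ≥0) : ℝ := v * o.1 - o.2

theorem utility_postedPrice_nonneg (p : ℝ≥0∞) (v : ℝ≥0) : 0 ≤ utility v (postedPrice p v) := by
  unfold postedPrice utility
  split_ifs with h
  · simpa using ENNReal.toNNReal_mono ENNReal.coe_ne_top h
  · simp

theorem utility_postedPrice_le {p p' : ℝ≥0∞} {v v' : ℝ≥0}
    (h : ∀ x : ℝ≥0, x < v → x ≤ v' → p' ≤ x → p ≤ x) :
    utility v (postedPrice p' v') ≤ utility v (postedPrice p v) := by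
  by_cases win' : p' ≤ v'
  · lift p' to ℝ≥0 using ne_top_of_le_ne_top ENNReal.coe_ne_top win'
    obtain profit | loss := lt_or_ge p' v
    · have hpp' := h p' profit (ENNReal.coe_le_coe.1 win') le_rfl
      have win : p ≤ v := hpp'.trans (ENNReal.coe_le_coe.2 profit.le)
      simp only [utility, postedPrice, win, win', if_true, Nat.cast_one, mul_one]
      gcongr
      exact ENNReal.coe_ne_top
    · refine le_trans ?_ (utility_postedPrice_nonneg p v)
      simpa [utility, postedPrice, win'] using loss
  · simpa [utility, postedPrice, win'] using utility_postedPrice_nonneg p v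

end Utility

theorem distanceBased_truthfulValue_dominates_general {B : Type*} [Fintype B] [DecidableEq B]
    [LinearOrder B] (k : ℕ) (extra : Multiset ℝ≥0) (θ : Profile B) (rs : Finset B) (i : B)
    (v' : ℝ≥0) :
    let θ' := Function.update θ i (v', (θ i).2)
    utility (θ i).1 (outcomeOf (runAux θ rs extra (prioList θ rs) ∅ k) i) ≥
      utility (θ i).1 (outcomeOf (runAux θ' rs extra (prioList θ' rs) ∅ k) i) := by
  intro θ'
  have hr : ∀ j, (θ j).2 = (θ' j).2 := fun j => by
    obtain rfl | hj := eq_or_ne j i <;> simp [θ', *]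
  have hv : ∀ j ≠ i, (θ j).1 = (θ' j).1 := fun j hj => by simp [θ', hj]
  rw [← prioList_congr hr]
  by_cases hi : i ∈ prioList θ rs
  · have pools := pairwise_mem_NhatMinus_prioList θ rs
    have nodup := nodup_prioList θ rs
    obtain ⟨l₁, l₂, split⟩ := List.append_of_mem hi
    rw [split] at pools nodup ⊢
    rw [outcomeOf_runAux_eq_postedPrice pools,
      outcomeOf_runAux_eq_postedPrice (NhatMinus_congr hr ▸ pools)]
    refine utility_postedPrice_le fun x hx hx' hprice =>
      offeredPrice_le_of_offeredPrice_le hr hv (List.nodup_append.1 nodup).1 (fun j hj => ?_)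
        hx hx' hprice
    exact (List.pairwise_append.1 pools).2.2 j hj i List.mem_cons_self
  · rw [outcomeOf_runAux_of_notMem hi, outcomeOf_runAux_of_notMem hi]

/-- **Lemma 2.** In the distance-based mechanism, truthful value reporting
weakly dominates value misreporting when the forwarded follower set is fixed: for every
buyer `i` with true type `θ i = (v_i, r_i)`, every profile of reports of the others, and
every report `(v', r_i)`, the truthful utility is at least the deviating utility. -/
theorem distanceBased_truthfulValue_dominates (k : ℕ) (θ : Profile N) (rs : Finset N)
    (i : N) (v' : ℝ≥0) :
    ((θ i).1 : ℝ) * ((DBM k θ rs).1 i : ℝ) - ((DBM k θ rs).2 i : ℝ) ≥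
      ((θ i).1 : ℝ) * ((DBM k (Function.update θ i (v', (θ i).2)) rs).1 i : ℝ) -
        ((DBM k (Function.update θ i (v', (θ i).2)) rs).2 i : ℝ) :=
  distanceBased_truthfulValue_dominates_general k 0 θ rs i v'

end SNA
end

section
/- In the distance-based mechanism with reserve price v_h, if all buyers report truthfully (true values and full forwarding), then exactly min(ℓ, k) units are allocated, where ℓ = #{i ∈ N̂ : v_i ≥ v_h} is the number of connected buyers whose value is at least v_h. -/
open scoped Classical NNReal ENNReal

namespace SNA

variable {N : Type*} [Fintype N] [DecidableEq N] [LinearOrder N]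

/-! Two observations settle the count. When `k'` units remain, the price is at least the `k'`-th
highest value of the `k` dummies alone, so every winner has value at least `vh`. A loser `i` with
`vh ≤ v_i` faces a price above `v_i`; no dummy value exceeds `v_i`, so at least `k'` connected
buyers who have not yet won have values above `v_i`, and together with the `k - k'` earlier
winners they make `k` buyers. For a loser `i` of maximal value at least `vh` all of these buyers
win, so `k` units are sold; if there is no such loser, all `ℓ` buyers with value at least `vh`
win. Neither observation depends on the order in which the buyers are processed. -/

open scoped Finset

section KthHighest

theorem lt_getElem_iff_length_le_add_countP {α : Type*} [LinearOrder α] {l : List α}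
    (hl : l.SortedLE) {n : ℕ} (hn : n < l.length) (a : α) :
    a < l[n] ↔ l.length ≤ n + l.countP (a < ·) := by
  constructor
  · intro ha
    have hdrop : (l.drop n).countP (a < ·) = (l.drop n).length := by
      simp only [List.countP_eq_length, List.mem_drop_iff_getElem, decide_eq_true_eq]
      rintro _ ⟨j, hj, rfl⟩
      exact ha.trans_le (hl.getElem_le_getElem_of_le (by lia))
    have hle : (l.drop n).countP (a < ·) ≤ l.countP (a < ·) :=
      (List.drop_sublist n l).countP_le
    grind
  · contrapose!
    intro ha
    have htake : (l.take (n + 1)).countP (a < ·) = 0 := by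
      simp only [List.countP_eq_zero, List.mem_take_iff_getElem, decide_eq_true_eq, not_lt]
      rintro _ ⟨j, hj, rfl⟩
      exact (hl.getElem_le_getElem_of_le (by lia)).trans ha
    have hdrop : (l.drop (n + 1)).countP (a < ·) ≤ l.length - (n + 1) := by
      simpa using List.countP_le_length (l := l.drop (n + 1)) (p := (a < ·))
    rw [← List.take_append_drop (n + 1) l, List.countP_append]
    grind

theorem coe_lt_kthHighest_iff {s : Multiset ℝ≥0} {k : ℕ} {v : ℝ≥0} :
    (v : ℝ≥0∞) < kthHighest s k ↔ k ≤ s.countP (v < ·) := by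
  unfold kthHighest
  split_ifs with hk hcard
  · simp [hk]
  · have := s.countP_le_card (v < ·)
    simp only [not_lt_zero, false_iff]
    lia
  · have hlen : (s.sort (· ≤ ·)).length = s.card := s.length_sort _
    have hcount : (s.sort (· ≤ ·)).countP (v < ·) = s.countP (v < ·) := by
      rw [← Multiset.coe_countP, s.sort_eq]
    have hlt : s.card - k < (s.sort (· ≤ ·)).length := by lia
    rw [List.getD_eq_getElem _ _ hlt, ENNReal.coe_lt_coe,
      lt_getElem_iff_length_le_add_countP (s.pairwise_sort _).sortedLE hlt, hlen, hcount]
    lia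

theorem coe_le_kthHighest {s : Multiset ℝ≥0} {k : ℕ} {v : ℝ≥0} (h : k ≤ s.countP (v ≤ ·)) :
    (v : ℝ≥0∞) ≤ kthHighest s k := by
  refine le_of_forall_lt fun c hc => ?_
  lift c to ℝ≥0 using hc.ne_top
  have hcount : s.countP (v ≤ ·) ≤ s.countP (c < ·) := by
    simp only [Multiset.countP_eq_card_filter]
    exact Multiset.card_le_card
      (s.monotone_filter_right fun _ => (ENNReal.coe_lt_coe.1 hc).trans_le)
  exact coe_lt_kthHighest_iff.2 (h.trans hcount)

end KthHighest

section Run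

omit [LinearOrder N]

variable {θ : Profile N} {rs W : Finset N} {extra : Multiset ℝ≥0} {l : List N} {k : ℕ} {i : N}
  {v : ℝ≥0}

/-- The price `p_i = v*((N̂₋ᵢ ∖ W) + extra, k)` that the mechanism sets for buyer `i` when the
buyers in `W` have already won and `k` units remain. -/
noncomputable def price (θ : Profile N) (rs : Finset N) (extra : Multiset ℝ≥0) (W : Finset N)
    (k : ℕ) (i : N) : ℝ≥0∞ :=
  kthHighest ((NhatMinus θ rs i \ W).val.map (fun j => (θ j).1) + extra) k

/-- The buyers of the list who win a unit in the run `runAux` started from the winner set `W` with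
`k` units left; the members of `W` are not counted. -/
noncomputable def winners (θ : Profile N) (rs : Finset N) (extra : Multiset ℝ≥0) :
    List N → Finset N → ℕ → Finset N
  | [], _, _ => ∅
  | i :: l, W, k =>
    if price θ rs extra W k i ≤ (θ i).1 then insert i (winners θ rs extra l (insert i W) (k - 1))
    else winners θ rs extra l W k

theorem coe_lt_price_iff :
    (v : ℝ≥0∞) < price θ rs extra W k i ↔
      k ≤ #{j ∈ NhatMinus θ rs i \ W | v < (θ j).1} + extra.countP (v < ·) := by
  rw [price, coe_lt_kthHighest_iff, Multiset.countP_add, Multiset.countP_map, Finset.card_def,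
    Finset.filter_val]

theorem coe_le_price (h : k ≤ extra.countP (v ≤ ·)) : (v : ℝ≥0∞) ≤ price θ rs extra W k i :=
  coe_le_kthHighest (by rw [Multiset.countP_add]; lia)

theorem pos_of_price_le (h : price θ rs extra W k i ≤ v) : 0 < k := by
  have := coe_lt_price_iff.not.1 h.not_gt
  lia

theorem winners_subset : winners θ rs extra l W k ⊆ l.toFinset := by
  induction l generalizing W k with
  | nil => simp [winners]
  | cons a l ih =>
    rw [winners, List.toFinset_cons]
    split_ifs
    · exact Finset.insert_subset_insert a ih
    · exact ih.trans (Finset.subset_insert a _)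

theorem notMem_winners (hi : i ∉ l) : i ∉ winners θ rs extra l W k :=
  fun h => hi (List.mem_toFinset.1 (winners_subset h))

theorem runAux_cons_fst (a : N) :
    (runAux θ rs extra (a :: l) W k).1 =
      if price θ rs extra W k a ≤ (θ a).1 then
        Function.update (runAux θ rs extra l (insert a W) (k - 1)).1 a 1
      else Function.update (runAux θ rs extra l W k).1 a 0 := by
  rw [runAux, price]
  split_ifs <;> rfl

theorem runAux_fst_eq_indicator (hl : l.Nodup) :
    (runAux θ rs extra l W k).1 = (winners θ rs extra l W k : Set N).indicator 1 := by
  induction l generalizing W k with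
  | nil => simp [runAux, winners]
  | cons a l ih =>
    have ⟨ha, hl⟩ := List.nodup_cons.1 hl
    rw [runAux_cons_fst, winners]
    split_ifs with hp <;> ext j <;> rcases eq_or_ne j a with rfl | hja
    · simp
    · simp [ih hl, hja, Set.indicator_apply]
    · simp [notMem_winners ha]
    · simp [ih hl, hja]

theorem sum_runAux_fst (hl : l.Nodup) :
    ∑ i, (runAux θ rs extra l W k).1 i = #(winners θ rs extra l W k) := by
  rw [runAux_fst_eq_indicator hl]
  simp [Set.indicator_apply]

theorem card_winners_le : #(winners θ rs extra l W k) ≤ k := by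
  induction l generalizing W k with
  | nil => simp [winners]
  | cons a l ih =>
    rw [winners]
    split_ifs with hp
    · calc #(insert a (winners θ rs extra l (insert a W) (k - 1)))
          ≤ #(winners θ rs extra l (insert a W) (k - 1)) + 1 := Finset.card_insert_le ..
        _ ≤ k - 1 + 1 := by gcongr; exact ih
        _ = k := Nat.sub_add_cancel (pos_of_price_le hp)
    · exact ih

theorem le_of_mem_winners (hv : k ≤ extra.countP (v ≤ ·)) (hi : i ∈ winners θ rs extra l W k) :
    v ≤ (θ i).1 := by
  induction l generalizing W k with
  | nil => simp [winners] at hi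
  | cons a l ih =>
    rw [winners] at hi
    split_ifs at hi with hp
    · rcases Finset.mem_insert.1 hi with rfl | hi
      · exact ENNReal.coe_le_coe.1 ((coe_le_price hv).trans hp)
      · exact ih (by lia) hi
    · exact ih hv hi

theorem le_card_higher_of_lt_price (hextra : ∀ x ∈ extra, x ≤ (θ i).1)
    (hp : (θ i).1 < price θ rs extra W k i) :
    k ≤ #({j ∈ Nhat θ rs | (θ i).1 < (θ j).1} \ W) := by
  have hzero : extra.countP ((θ i).1 < ·) = 0 :=
    Multiset.countP_eq_zero.2 fun x hx => (hextra x hx).not_gt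
  have hk := coe_lt_price_iff.1 hp
  rw [hzero, add_zero] at hk
  refine hk.trans (Finset.card_le_card fun j => ?_)
  simp only [NhatMinus, Finset.mem_filter, Finset.mem_sdiff]
  tauto

theorem le_card_winners_union_higher (hl : l.Nodup) (hi : i ∈ l)
    (hlose : i ∉ winners θ rs extra l W k) (hextra : ∀ x ∈ extra, x ≤ (θ i).1) :
    k ≤ #(winners θ rs extra l W k ∪ {j ∈ Nhat θ rs | (θ i).1 < (θ j).1} \ W) := by
  set H : Finset N := {j ∈ Nhat θ rs | (θ i).1 < (θ j).1}
  induction l generalizing W k with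
  | nil => simp at hi
  | cons a l ih =>
    have ⟨ha, hl⟩ := List.nodup_cons.1 hl
    rw [winners] at hlose ⊢
    split_ifs at hlose ⊢ with hp
    · have ⟨hia, hlose⟩ := not_or.1 (Finset.mem_insert.not.1 hlose)
      have hk := ih hl (List.mem_of_ne_of_mem hia hi) hlose
      set F := winners θ rs extra l (insert a W) (k - 1)
      have haF : a ∉ F ∪ H \ insert a W := by simp [F, notMem_winners ha]
      calc k ≤ #(F ∪ H \ insert a W) + 1 := by lia
        _ = #(insert a (F ∪ H \ insert a W)) := (Finset.card_insert_of_notMem haF).symm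
        _ ≤ #(insert a F ∪ H \ W) := Finset.card_le_card (by grind)
    · rcases List.mem_cons.1 hi with rfl | hi
      · exact (le_card_higher_of_lt_price hextra (not_le.1 hp)).trans
          (Finset.card_le_card Finset.subset_union_right)
      · exact ih hl hi hlose

theorem le_card_winners_of_nonempty_losers (hl : l.Nodup) (hsub : Nhat θ rs ⊆ l.toFinset)
    (hextra : ∀ x ∈ extra, x ≤ v)
    (hne : ({i ∈ Nhat θ rs | v ≤ (θ i).1} \ winners θ rs extra l ∅ k).Nonempty) :
    k ≤ #(winners θ rs extra l ∅ k) := by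
  obtain ⟨i, hi, hmax⟩ := Finset.exists_max_image _ (fun i => (θ i).1) hne
  obtain ⟨⟨hiN, hiv⟩, hlose⟩ : (i ∈ Nhat θ rs ∧ v ≤ (θ i).1) ∧ i ∉ winners θ rs extra l ∅ k := by
    simpa using hi
  have hhigher : {j ∈ Nhat θ rs | (θ i).1 < (θ j).1} ⊆ winners θ rs extra l ∅ k := fun j hj => by
    obtain ⟨hjN, hij⟩ := Finset.mem_filter.1 hj
    by_contra hjF
    exact (hmax j (by simp [hjN, hjF, hiv.trans hij.le])).not_gt hij
  have hk := le_card_winners_union_higher hl (List.mem_toFinset.1 (hsub hiN)) hlose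
    fun x hx => (hextra x hx).trans hiv
  rwa [Finset.sdiff_empty, Finset.union_eq_left.2 hhigher] at hk

theorem distanceBased_reserve_allocates_general (k : ℕ) (vh : ℝ≥0) (θ : Profile N)
    (rs : Finset N) {l : List N} (hl : l.Perm (Nhat θ rs).toList) :
    ∑ i, (runAux θ rs (Multiset.replicate k vh) l ∅ k).1 i =
      min ((Nhat θ rs).filter fun i => vh ≤ (θ i).1).card k := by
  have hnodup : l.Nodup := hl.nodup_iff.2 (Nhat θ rs).nodup_toList
  have htoFinset : l.toFinset = Nhat θ rs := by
    rw [List.toFinset_eq_of_perm _ _ hl, Finset.toList_toFinset]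
  rw [sum_runAux_fst hnodup]
  set F := winners θ rs (Multiset.replicate k vh) l ∅ k
  set E := (Nhat θ rs).filter fun i => vh ≤ (θ i).1
  have hcount : k ≤ (Multiset.replicate k vh).countP (vh ≤ ·) := by
    simp [← Multiset.coe_replicate, List.countP_replicate]
  have hFE : F ⊆ E := fun i hi =>
    Finset.mem_filter.2 ⟨htoFinset ▸ winners_subset hi, le_of_mem_winners hcount hi⟩
  have hFk : #F ≤ k := card_winners_le
  rcases (E \ F).eq_empty_or_nonempty with hnone | hlosers
  · rw [hFE.antisymm (Finset.sdiff_eq_empty_iff_subset.1 hnone)] at hFk ⊢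
    exact (min_eq_left hFk).symm
  · have hkF : k ≤ #F := le_card_winners_of_nonempty_losers hnodup htoFinset.ge
      (fun x hx => (Multiset.eq_of_mem_replicate hx).le) hlosers
    rw [hFk.antisymm hkF, min_eq_right (hkF.trans (Finset.card_le_card hFE))]

end Run

/-- **Lemma 3.** In the distance-based mechanism with reserve price `vh`,
under truthful reporting exactly `min ℓ k` units are allocated, where
`ℓ = #{i ∈ N̂ : v_i ≥ vh}`. -/
theorem distanceBased_reserve_allocates (k : ℕ) (vh : ℝ≥0) (θ : Profile N)
    (rs : Finset N) :
    ∑ i, (DBMres k vh θ rs).1 i =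
      min ((Nhat θ rs).filter fun i => vh ≤ (θ i).1).card k :=
  distanceBased_reserve_allocates_general k vh θ rs
    ((List.mergeSort_perm _ _).trans (Finset.sort_perm_toList _ _))

end SNA
end
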